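/- For every complex number q with |q| < 1, the sum over all nonnegative integers j of q^(j^2) / ((q;q)_j) equals the product over all positive integers j with j not congruent to 0, 2, or -2 modulo 5 of 1/(1 - q^j). Here (a;q)_j denotes the finite q-Pochhammer symbol ∏_{h=0}^{j-1} (1 - a q^h), with (a;q)_0 = 1. -/

import Mathlib

/-- The finite q-Pochhammer symbol `(a; q)_n = ∏_{h=0}^{n-1} (1 - a q^h)`. -/
noncomputable def qPoch (a q : ℂ) (n : ℕ) : ℂ := ∏ h ∈ Finset.range n, (1 - a * q ^ h)

/-!
With `a = 1`, the finite Jacobi triple product says that `(-1) ^ r * q ^ (r.choose 2)` and the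
Kronecker delta at `0` form a bilateral Bailey pair. One application of Bailey's lemma turns the
delta into `1 / (q; q)_n`; a second one, in the limit `n → ∞`, gives
`∑ q ^ (j ^ 2) / (q; q)_j = (q; q)_∞⁻¹ * ∑ (-1) ^ r * q ^ (r * (5 * r - 1) / 2)`. The triple product
in base `q ^ 5` evaluates the theta series as `(q ^ 2, q ^ 3, q ^ 5; q ^ 5)_∞`, which cancels
against three of the five residue classes modulo `5` in `(q; q)_∞`.
-/

open Filter Topology

theorem two_mul_choose_two {R : Type*} [CommRing R] [BinomialRing R] (r : R) :
    2 * Ring.choose r 2 = r * (r - 1) := by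
  have h := Ring.descPochhammer_eq_factorial_smul_choose r 2
  rw [Nat.factorial_two, two_nsmul, ← two_mul] at h
  rw [← h, descPochhammer_succ_right, Polynomial.smeval_mul]
  simp [Polynomial.smeval_sub]

theorem choose_add_one_two {R : Type*} [CommRing R] [BinomialRing R] (r : R) :
    Ring.choose (r + 1) 2 = r + Ring.choose r 2 := by
  rw [Ring.choose_succ_succ, Ring.choose_one_right]

theorem choose_neg_two {R : Type*} [CommRing R] [BinomialRing R] (r : R) :
    Ring.choose (-r) 2 = r + Ring.choose r 2 := by
  have : IsAddTorsionFree R := BinomialRing.toIsAddTorsionFree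
  refine nsmul_right_injective two_ne_zero ?_
  simp only [nsmul_eq_mul, Nat.cast_two]
  linear_combination two_mul_choose_two (-r) - two_mul_choose_two r

theorem tendsto_tsum_mul_of_norm_le {ι β R : Type*} [NormedRing R] [CompleteSpace R]
    {l : Filter ι} {f : β → R} {g : ι → β → R} {c : R} (C : ℝ) (hf : Summable fun k ↦ ‖f k‖)
    (hg : ∀ k, Tendsto (g · k) l (𝓝 c)) (hC : ∀ i k, ‖g i k‖ ≤ C) :
    Tendsto (fun i ↦ ∑' k, f k * g i k) l (𝓝 ((∑' k, f k) * c)) := by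
  rw [← hf.of_norm.tsum_mul_right]
  refine tendsto_tsum_of_dominated_convergence (hf.mul_right C)
    (fun k ↦ (hg k).const_mul (f k)) (Eventually.of_forall fun i k ↦ ?_)
  exact (norm_mul_le _ _).trans (by gcongr; exact hC i k)

section Theta

theorem zpow_neg_mul_zpow_choose_neg {K : Type*} [Field K] {q : K} (hq : q ≠ 0) (z : K) (r : ℤ) :
    z ^ (-r) * q ^ Ring.choose (-r) 2 = (q / z) ^ r * q ^ Ring.choose r 2 := by
  rw [choose_neg_two, zpow_add₀ hq, div_zpow, zpow_neg]
  ring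

variable {K : Type*} [NormedField K] [CompleteSpace K] {q z : K}

theorem summable_zpow_mul_zpow_choose (hq : ‖q‖ < 1) (hq0 : q ≠ 0) (hz : z ≠ 0) :
    Summable fun r : ℤ ↦ z ^ r * q ^ Ring.choose r 2 := by
  have summable_nat {w : K} (hw : w ≠ 0) :
      Summable fun n : ℕ ↦ w ^ (n : ℤ) * q ^ Ring.choose (n : ℤ) 2 := by
    have hne (n : ℕ) : w ^ (n : ℤ) * q ^ Ring.choose (n : ℤ) 2 ≠ 0 :=
      mul_ne_zero (zpow_ne_zero _ hw) (zpow_ne_zero _ hq0)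
    refine summable_of_ratio_test_tendsto_lt_one zero_lt_one (Eventually.of_forall hne) ?_
    have hlim : Tendsto (fun n : ℕ ↦ ‖w * q ^ n‖) atTop (𝓝 0) := by
      simpa using ((tendsto_pow_atTop_nhds_zero_of_norm_lt_one hq).const_mul w).norm
    refine hlim.congr fun n ↦ ?_
    rw [← norm_div, Nat.cast_succ, choose_add_one_two, zpow_add_one₀ hw, zpow_add₀ hq0,
      zpow_natCast q n, eq_comm]
    congr 1
    rw [div_eq_iff (hne n)]
    ring
  refine Summable.of_nat_of_neg (summable_nat hz) ?_
  simpa only [zpow_neg_mul_zpow_choose_neg hq0] using summable_nat (div_ne_zero hq0 hz)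

theorem summable_zpow_sq (hq : ‖q‖ < 1) (hq0 : q ≠ 0) : Summable fun r : ℤ ↦ q ^ r ^ 2 := by
  have hq2 : ‖q ^ 2‖ < 1 := by simpa using pow_lt_one₀ (norm_nonneg q) hq two_ne_zero
  refine (summable_zpow_mul_zpow_choose hq2 (pow_ne_zero 2 hq0) hq0).congr fun r ↦ ?_
  rw [← zpow_natCast, ← zpow_mul, ← zpow_add₀ hq0, Nat.cast_two, two_mul_choose_two]
  congr 1
  ring

end Theta

section FiniteIdentities

variable {q z : ℂ}

theorem qPoch_zero (a q : ℂ) : qPoch a q 0 = 1 := Finset.prod_range_zero _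

theorem qPoch_succ (a q : ℂ) (n : ℕ) : qPoch a q (n + 1) = qPoch a q n * (1 - a * q ^ n) :=
  Finset.prod_range_succ _ n

theorem qPoch_one_left_succ (q : ℂ) (n : ℕ) : qPoch 1 q (n + 1) = 0 :=
  Finset.prod_eq_zero (Finset.mem_range.mpr n.succ_pos) (by simp)

/-- The reciprocal `1 / (q; q)_k`, extended by `0` to negative `k` in accordance with
`1 / (q; q)_k = (q ^ (k + 1); q)_∞ / (q; q)_∞`. With this convention finite `q`-identities become
sums over all of `ℤ`. -/
noncomputable def invQPoch (q : ℂ) : ℤ → ℂ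
  | .ofNat n => (qPoch q q n)⁻¹
  | .negSucc _ => 0

theorem invQPoch_natCast (q : ℂ) (n : ℕ) : invQPoch q n = (qPoch q q n)⁻¹ := rfl

theorem invQPoch_zero (q : ℂ) : invQPoch q 0 = 1 := by
  rw [← Nat.cast_zero, invQPoch_natCast, qPoch_zero, inv_one]

theorem invQPoch_of_neg (q : ℂ) {k : ℤ} (hk : k < 0) : invQPoch q k = 0 := by
  obtain ⟨n, rfl⟩ := Int.eq_negSucc_of_lt_zero hk
  rfl

theorem nonneg_of_invQPoch_ne_zero {k : ℤ} (hk : invQPoch q k ≠ 0) : 0 ≤ k :=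
  not_lt.mp fun h ↦ hk (invQPoch_of_neg q h)

theorem one_sub_zpow_ne_zero {K : Type*} [DivisionRing K] {q : K} (hq : ¬IsOfFinOrder q)
    {k : ℤ} (hk : 0 < k) : 1 - q ^ k ≠ 0 := by
  lift k to ℕ using hk.le
  rw [zpow_natCast, sub_ne_zero]
  exact fun h ↦ hq (isOfFinOrder_iff_pow_eq_one.mpr ⟨k, by exact_mod_cast hk, h.symm⟩)

theorem one_sub_zpow_mul_invQPoch (hq : ¬IsOfFinOrder q) (k : ℤ) :
    (1 - q ^ k) * invQPoch q k = invQPoch q (k - 1) := by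
  rcases lt_trichotomy k 0 with hk | rfl | hk
  · rw [invQPoch_of_neg q hk, invQPoch_of_neg q (by lia), mul_zero]
  · rw [invQPoch_of_neg q (by lia : (0 : ℤ) - 1 < 0), zpow_zero, sub_self, zero_mul]
  · have hne := one_sub_zpow_ne_zero hq hk
    obtain ⟨n, rfl⟩ : ∃ n : ℕ, k = (n + 1 : ℕ) := ⟨(k - 1).toNat, by lia⟩
    rw [zpow_natCast] at hne ⊢
    rw [Nat.cast_succ, add_sub_cancel_right, ← Nat.cast_succ, invQPoch_natCast, invQPoch_natCast,
      qPoch_succ, ← pow_succ', mul_inv, mul_left_comm, mul_inv_cancel₀ hne, mul_one]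

/-- The summand of the `q`-Vandermonde identity `hasSum_qVandermondeTerm`; it vanishes unless
`0 ≤ i ≤ n`. -/
noncomputable def qVandermondeTerm (q : ℂ) (n c i : ℤ) : ℂ :=
  q ^ (i * (i + c)) * invQPoch q (n - i) * invQPoch q i * invQPoch q (i + c)

theorem qVandermondeTerm_eq_zero {n i : ℤ} (q : ℂ) (c : ℤ) (hi : i < 0 ∨ n < i) :
    qVandermondeTerm q n c i = 0 := by
  rcases hi with hi | hi
  · simp [qVandermondeTerm, invQPoch_of_neg q hi]
  · simp [qVandermondeTerm, invQPoch_of_neg q (sub_neg_of_lt hi)]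

theorem one_sub_zpow_mul_qVandermondeTerm (hq : ¬IsOfFinOrder q) (hq0 : q ≠ 0) (n c i : ℤ) :
    (1 - q ^ n) * qVandermondeTerm q n c i =
      qVandermondeTerm q (n - 1) c i +
        q ^ (n + c) * qVandermondeTerm q (n - 1) (c + 1) (i - 1) := by
  have split_pow : q ^ n = q ^ (n - i) * q ^ i := by rw [← zpow_add₀ hq0, sub_add_cancel]
  have shift_pow : q ^ (n + c) * q ^ ((i - 1) * (i + c)) = q ^ (i * (i + c)) * q ^ (n - i) := by
    rw [← zpow_add₀ hq0, ← zpow_add₀ hq0]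
    congr 1
    ring
  have rec_left : (1 - q ^ (n - i)) * invQPoch q (n - i) = invQPoch q (n - 1 - i) := by
    rw [one_sub_zpow_mul_invQPoch hq, sub_right_comm]
  have rec_right := one_sub_zpow_mul_invQPoch hq i
  rw [qVandermondeTerm, qVandermondeTerm, qVandermondeTerm, sub_sub_sub_cancel_right,
    show i - 1 + (c + 1) = i + c by ring, ← rec_left, ← rec_right, split_pow]
  linear_combination -(invQPoch q (n - i) * (1 - q ^ i) * invQPoch q i *
    invQPoch q (i + c)) * shift_pow

theorem hasSum_qVandermondeTerm (hq : ¬IsOfFinOrder q) (hq0 : q ≠ 0) (n c : ℤ) :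
    HasSum (qVandermondeTerm q n c) (invQPoch q n * invQPoch q (n + c)) := by
  obtain hn | hn := lt_or_ge n 0
  · rw [invQPoch_of_neg q hn, zero_mul]
    exact hasSum_zero.congr_fun fun i ↦ qVandermondeTerm_eq_zero q c (by lia)
  lift n to ℕ using hn
  induction n generalizing c with
  | zero =>
    have single := hasSum_single (f := qVandermondeTerm q 0 c) 0 fun i hi ↦
      qVandermondeTerm_eq_zero q c (lt_or_gt_of_ne hi)
    simpa [qVandermondeTerm, invQPoch_zero] using single
  | succ n ih =>
    have hne : 1 - q ^ (n + 1 : ℤ) ≠ 0 := one_sub_zpow_ne_zero hq (by positivity)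
    have shifted := ((Equiv.subRight (1 : ℤ)).hasSum_iff.mpr (ih (c + 1))).mul_left
      (q ^ (n + 1 + c : ℤ))
    have sum_rec : (1 - q ^ (n + 1 : ℤ)) * (invQPoch q (n + 1) * invQPoch q (n + 1 + c)) =
        invQPoch q n * invQPoch q (n + c) +
          q ^ (n + 1 + c : ℤ) * (invQPoch q n * invQPoch q (n + (c + 1))) := by
      have rec_left := one_sub_zpow_mul_invQPoch hq (n + 1)
      have rec_right := one_sub_zpow_mul_invQPoch hq (n + 1 + c)
      rw [add_sub_cancel_right] at rec_left
      rw [show (n : ℤ) + (c + 1) = n + 1 + c by ring, show (n : ℤ) + c = n + 1 + c - 1 by ring,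
        ← rec_left, ← rec_right]
      ring
    rw [Nat.cast_succ, ← hasSum_mul_left_iff hne, sum_rec]
    simp only [one_sub_zpow_mul_qVandermondeTerm hq hq0, add_sub_cancel_right]
    exact (ih c).add shifted

/-- The summand of the finite Jacobi triple product `hasSum_tripleProductTerm`; it vanishes unless
`-b ≤ r ≤ a`. -/
noncomputable def tripleProductTerm (q z : ℂ) (a b r : ℤ) : ℂ :=
  (-z) ^ r * q ^ Ring.choose r 2 * invQPoch q (a - r) * invQPoch q (b + r)

theorem tripleProductTerm_neg (hq0 : q ≠ 0) (z : ℂ) (a b r : ℤ) :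
    tripleProductTerm q z a b (-r) = tripleProductTerm q (q / z) b a r := by
  rw [tripleProductTerm, tripleProductTerm, zpow_neg_mul_zpow_choose_neg hq0, sub_neg_eq_add,
    ← sub_eq_add_neg, div_neg]
  ring

theorem one_sub_zpow_mul_tripleProductTerm (hq : ¬IsOfFinOrder q) (hq0 : q ≠ 0) (hz : z ≠ 0)
    (a b r : ℤ) :
    (1 - q ^ (a + b)) * tripleProductTerm q z a b r =
      tripleProductTerm q z (a - 1) b r +
        -z * q ^ (a - 1) * tripleProductTerm q z (a - 1) b (r - 1) := by
  have split_pow : q ^ (a + b) = q ^ (a - r) * q ^ (b + r) := by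
    rw [← zpow_add₀ hq0, sub_add_add_cancel, add_comm]
  have shift_pow : q ^ Ring.choose r 2 * q ^ (a - r) = q ^ (a - 1) * q ^ Ring.choose (r - 1) 2 := by
    obtain ⟨s, rfl⟩ : ∃ s, r = s + 1 := ⟨r - 1, by ring⟩
    rw [← zpow_add₀ hq0, ← zpow_add₀ hq0, choose_add_one_two, add_sub_cancel_right]
    congr 1
    ring
  have shift_z : (-z) ^ r = (-z) ^ (r - 1) * -z := by
    rw [← zpow_add_one₀ (neg_ne_zero.mpr hz), sub_add_cancel]
  have rec_left : (1 - q ^ (a - r)) * invQPoch q (a - r) = invQPoch q (a - 1 - r) := by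
    rw [one_sub_zpow_mul_invQPoch hq, sub_right_comm]
  have rec_right : (1 - q ^ (b + r)) * invQPoch q (b + r) = invQPoch q (b + (r - 1)) := by
    rw [one_sub_zpow_mul_invQPoch hq, add_sub_assoc]
  rw [tripleProductTerm, tripleProductTerm, tripleProductTerm, sub_sub_sub_cancel_right,
    ← rec_left, ← rec_right, split_pow, shift_z]
  linear_combination ((-z) ^ (r - 1) * -z * invQPoch q (a - r) * (1 - q ^ (b + r)) *
    invQPoch q (b + r)) * shift_pow

theorem hasSum_tripleProductTerm_zero (q z : ℂ) : HasSum (tripleProductTerm q z 0 0) 1 := by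
  have single := hasSum_single (f := tripleProductTerm q z 0 0) 0 fun r hr ↦ by
    rcases lt_or_gt_of_ne hr with hr | hr
    · simp [tripleProductTerm, invQPoch_of_neg q hr]
    · simp [tripleProductTerm, invQPoch_of_neg q (neg_neg_of_pos hr)]
  simpa [tripleProductTerm, invQPoch_zero, Ring.choose_zero_succ] using single

theorem hasSum_tripleProductTerm_succ (hq : ¬IsOfFinOrder q) (hq0 : q ≠ 0) (hz : z ≠ 0) {a b : ℕ}
    {w : ℂ} (h : HasSum (tripleProductTerm q z a b) (qPoch z q a * w * invQPoch q (a + b))) :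
    HasSum (tripleProductTerm q z (a + 1 : ℕ) b)
      (qPoch z q (a + 1) * w * invQPoch q ((a + 1 : ℕ) + b)) := by
  have hne : 1 - q ^ ((a + 1 : ℕ) + b : ℤ) ≠ 0 := one_sub_zpow_ne_zero hq (by positivity)
  have shifted := ((Equiv.subRight (1 : ℤ)).hasSum_iff.mpr h).mul_left (-z * q ^ (a : ℤ))
  have sum_rec : (1 - q ^ ((a + 1 : ℕ) + b : ℤ)) *
      (qPoch z q (a + 1) * w * invQPoch q ((a + 1 : ℕ) + b)) =
        qPoch z q a * w * invQPoch q (a + b) +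
          -z * q ^ (a : ℤ) * (qPoch z q a * w * invQPoch q (a + b)) := by
    have rec_inv := one_sub_zpow_mul_invQPoch hq ((a + 1 : ℕ) + b)
    rw [show ((a + 1 : ℕ) + b - 1 : ℤ) = a + b by push_cast; ring] at rec_inv
    rw [← rec_inv, qPoch_succ, zpow_natCast]
    ring
  rw [← hasSum_mul_left_iff hne, sum_rec]
  simp only [one_sub_zpow_mul_tripleProductTerm hq hq0 hz, Nat.cast_succ, add_sub_cancel_right]
  exact h.add shifted

theorem hasSum_tripleProductTerm (hq : ¬IsOfFinOrder q) (hq0 : q ≠ 0) (hz : z ≠ 0) (a b : ℕ) :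
    HasSum (tripleProductTerm q z a b) (qPoch z q a * qPoch (q / z) q b * invQPoch q (a + b)) := by
  have hqz : q / z ≠ 0 := div_ne_zero hq0 hz
  induction a with
  | succ a ih => exact hasSum_tripleProductTerm_succ hq hq0 hz ih
  | zero =>
    have reflected : HasSum (tripleProductTerm q (q / z) b (0 : ℕ))
        (qPoch (q / z) q b * 1 * invQPoch q (b + (0 : ℕ))) := by
      induction b with
      | zero => simpa [qPoch_zero, invQPoch_zero] using hasSum_tripleProductTerm_zero q (q / z)
      | succ b ih => exact hasSum_tripleProductTerm_succ hq hq0 hqz ih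
    rw [← (Equiv.neg ℤ).hasSum_iff, qPoch_zero, one_mul, add_comm]
    rw [mul_one] at reflected
    exact reflected.congr_fun fun r ↦ tripleProductTerm_neg hq0 z _ _ r

end FiniteIdentities

section BaileyPair

variable {q : ℂ} {m : ℤ} {α β : ℤ → ℂ}

/-- Bilateral Bailey pairs relative to `a = q ^ m`, up to normalisation: using `(q; q)_{n+r+m}` in
place of `(a q; q)_{n+r}` only rescales `β`. The sum over `r` has finitely many nonzero terms
because `invQPoch` vanishes at negative integers. -/
def IsBaileyPair (q : ℂ) (m : ℤ) (α β : ℤ → ℂ) : Prop :=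
  ∀ n, HasSum (fun r ↦ α r * invQPoch q (n - r) * invQPoch q (n + r + m)) (β n)

theorem hasSum_invQPoch_mul_invQPoch (hq : ¬IsOfFinOrder q) (hq0 : q ≠ 0) (m n r : ℤ) :
    HasSum (fun j ↦ q ^ (j ^ 2 + m * j) * invQPoch q (n - j) *
        invQPoch q (j - r) * invQPoch q (j + r + m))
      (q ^ (r ^ 2 + m * r) * invQPoch q (n - r) * invQPoch q (n + r + m)) := by
  have vandermonde := ((Equiv.subRight r).hasSum_iff.mpr
    (hasSum_qVandermondeTerm hq hq0 (n - r) (2 * r + m))).mul_left (q ^ (r ^ 2 + m * r))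
  rw [show n - r + (2 * r + m) = n + r + m by ring, ← mul_assoc] at vandermonde
  refine vandermonde.congr_fun fun j ↦ ?_
  have split_pow : q ^ (j ^ 2 + m * j) = q ^ (r ^ 2 + m * r) * q ^ ((j - r) * (j + r + m)) := by
    rw [← zpow_add₀ hq0]
    congr 1
    ring
  rw [split_pow, Function.comp_apply, Equiv.subRight_apply, qVandermondeTerm,
    sub_sub_sub_cancel_right, show j - r + (2 * r + m) = j + r + m by ring]
  ring

theorem IsBaileyPair.bailey_lemma (h : IsBaileyPair q m α β) (hq : ¬IsOfFinOrder q)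
    (hq0 : q ≠ 0) :
    IsBaileyPair q m (fun r ↦ q ^ (r ^ 2 + m * r) * α r)
      (fun n ↦ ∑' j, q ^ (j ^ 2 + m * j) * invQPoch q (n - j) * β j) := by
  intro n
  let F (p : ℤ × ℤ) : ℂ := q ^ (p.1 ^ 2 + m * p.1) * invQPoch q (n - p.1) *
    (α p.2 * invQPoch q (p.1 - p.2) * invQPoch q (p.1 + p.2 + m))
  have summable_F : Summable F := by
    refine summable_of_hasFiniteSupport
      ((Finset.Icc (-n - m) n ×ˢ Finset.Icc (-n - m) n).finite_toSet.subset fun p hp ↦ ?_)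
    simp only [F, Function.mem_support, mul_ne_zero_iff] at hp
    obtain ⟨⟨-, hnj⟩, ⟨-, hjr⟩, hjrm⟩ := hp
    have := nonneg_of_invQPoch_ne_zero hnj
    have := nonneg_of_invQPoch_ne_zero hjr
    have := nonneg_of_invQPoch_ne_zero hjrm
    simp only [Finset.coe_product, Finset.coe_Icc, Set.mem_prod, Set.mem_Icc]
    omega
  have row (j : ℤ) : HasSum (fun r ↦ F (j, r))
      (q ^ (j ^ 2 + m * j) * invQPoch q (n - j) * β j) :=
    (h j).mul_left (q ^ (j ^ 2 + m * j) * invQPoch q (n - j))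
  have column (r : ℤ) : HasSum (fun j ↦ F (j, r))
      (q ^ (r ^ 2 + m * r) * α r * invQPoch q (n - r) * invQPoch q (n + r + m)) := by
    have scaled := (hasSum_invQPoch_mul_invQPoch hq hq0 m n r).mul_left (α r)
    rw [← mul_assoc, ← mul_assoc, mul_comm (α r)] at scaled
    exact scaled.congr_fun fun j ↦ by ring
  have total : HasSum F (∑' j, q ^ (j ^ 2 + m * j) * invQPoch q (n - j) * β j) := by
    rw [(summable_F.hasSum.prod_fiberwise row).tsum_eq]
    exact summable_F.hasSum
  exact ((Equiv.prodComm ℤ ℤ).hasSum_iff.mpr total).prod_fiberwise column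

theorem isBaileyPair_unit (hq : ¬IsOfFinOrder q) (hq0 : q ≠ 0) :
    IsBaileyPair q 0 (fun r ↦ (-1) ^ r * q ^ Ring.choose r 2) (Pi.single 0 1) := by
  intro n
  simp only [add_zero]
  obtain hn | hn := lt_or_ge n 0
  · rw [Pi.single_eq_of_ne hn.ne]
    refine hasSum_zero.congr_fun fun r ↦ ?_
    obtain hr | hr := lt_or_ge (n - r) 0
    · simp [invQPoch_of_neg q hr]
    · simp [invQPoch_of_neg q (by lia : n + r < 0)]
  · lift n to ℕ using hn
    have triple := hasSum_tripleProductTerm hq hq0 one_ne_zero n n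
    have term_eq : tripleProductTerm q 1 n n = fun r ↦
        (-1) ^ r * q ^ Ring.choose r 2 * invQPoch q (n - r) * invQPoch q (n + r) := rfl
    rw [← term_eq]
    cases n with
    | zero => simpa [qPoch_zero, invQPoch_zero] using triple
    | succ n =>
      rw [Pi.single_eq_of_ne (by positivity)]
      simpa only [qPoch_one_left_succ, zero_mul] using triple

theorem isBaileyPair_invQPoch (hq : ¬IsOfFinOrder q) (hq0 : q ≠ 0) :
    IsBaileyPair q 0 (fun r ↦ q ^ r ^ 2 * ((-1) ^ r * q ^ Ring.choose r 2)) (invQPoch q) := by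
  have iterate := (isBaileyPair_unit hq hq0).bailey_lemma hq hq0
  simp only [zero_mul, add_zero] at iterate
  convert iterate using 1
  funext n
  rw [tsum_eq_single 0 fun j hj ↦ by rw [Pi.single_eq_of_ne hj, mul_zero]]
  simp

end BaileyPair

section InfiniteProducts

variable {q : ℂ}

/-- The infinite `q`-Pochhammer symbol `(a; q)_∞`. -/
noncomputable def qPochInf (a q : ℂ) : ℂ := ∏' n : ℕ, (1 - a * q ^ n)

theorem not_isOfFinOrder_of_norm_lt_one {K : Type*} [NormedDivisionRing K] {q : K}
    (hq : ‖q‖ < 1) : ¬IsOfFinOrder q :=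
  fun h ↦ hq.ne h.norm_eq_one

theorem summable_norm_neg_mul_pow (hq : ‖q‖ < 1) (a : ℂ) :
    Summable fun n : ℕ ↦ ‖-(a * q ^ n)‖ := by
  simpa [norm_mul, norm_pow] using
    (summable_geometric_of_lt_one (norm_nonneg q) hq).mul_left ‖a‖

theorem hasProd_qPochInf (hq : ‖q‖ < 1) (a : ℂ) :
    HasProd (fun n : ℕ ↦ 1 - a * q ^ n) (qPochInf a q) := by
  simpa only [qPochInf, sub_eq_add_neg] using
    (multipliable_one_add_of_summable (summable_norm_neg_mul_pow hq a)).hasProd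

theorem tendsto_qPoch (hq : ‖q‖ < 1) (a : ℂ) :
    Tendsto (qPoch a q) atTop (𝓝 (qPochInf a q)) :=
  (hasProd_qPochInf hq a).tendsto_prod_nat

theorem qPochInf_ne_zero {a : ℂ} (hq : ‖q‖ < 1) (ha : ∀ n : ℕ, a * q ^ n ≠ 1) :
    qPochInf a q ≠ 0 := by
  simp only [qPochInf, sub_eq_add_neg]
  refine tprod_one_add_ne_zero_of_summable (fun n ↦ ?_) (summable_norm_neg_mul_pow hq a)
  rw [← sub_eq_add_neg, sub_ne_zero]
  exact (ha n).symm

theorem qPochInf_pow_pow_ne_zero (hq : ‖q‖ < 1) {a m : ℕ} (ha : a ≠ 0) (hm : m ≠ 0) :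
    qPochInf (q ^ a) (q ^ m) ≠ 0 := by
  refine qPochInf_ne_zero (by simpa using pow_lt_one₀ (norm_nonneg q) hq hm) fun n h ↦ ?_
  rw [← pow_mul, ← pow_add] at h
  exact not_isOfFinOrder_of_norm_lt_one hq
    (isOfFinOrder_iff_pow_eq_one.mpr ⟨a + m * n, by positivity, h⟩)

theorem qPochInf_self_ne_zero (hq : ‖q‖ < 1) : qPochInf q q ≠ 0 := by
  simpa using qPochInf_pow_pow_ne_zero hq one_ne_zero one_ne_zero

theorem qPochInf_eq_prod_residues (hq : ‖q‖ < 1) (a : ℂ) (m : ℕ) [NeZero m] :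
    qPochInf a q = ∏ i : Fin m, qPochInf (a * q ^ (i : ℕ)) (q ^ m) := by
  have hqm : ‖q ^ m‖ < 1 := by simpa using pow_lt_one₀ (norm_nonneg q) hq (NeZero.ne m)
  have by_residue : HasProd (fun p : Fin m × ℕ ↦ 1 - a * q ^ (p.1 : ℕ) * (q ^ m) ^ p.2)
      (qPochInf a q) := by
    refine (((Equiv.prodComm (Fin m) ℕ).trans (Nat.divModEquiv m).symm).hasProd_iff.mpr
      (hasProd_qPochInf hq a)).congr_fun fun p ↦ ?_
    simp only [Function.comp_apply, Equiv.trans_apply, Equiv.prodComm_apply, Prod.fst_swap,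
      Prod.snd_swap, Nat.divModEquiv_symm_apply]
    ring
  have residue_class (i : Fin m) : HasProd (fun n : ℕ ↦ 1 - a * q ^ (i : ℕ) * (q ^ m) ^ n)
      (qPochInf (a * q ^ (i : ℕ)) (q ^ m)) := hasProd_qPochInf hqm (a * q ^ (i : ℕ))
  exact (by_residue.prod_fiberwise residue_class).unique
    (hasProd_fintype fun i : Fin m ↦ qPochInf (a * q ^ (i : ℕ)) (q ^ m))

theorem hasProd_inv_one_sub_pow_range (hq : ‖q‖ < 1) {a m : ℕ} (ha : a ≠ 0) (hm : m ≠ 0) :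
    HasProd ((fun j : ℕ ↦ (1 - q ^ j)⁻¹) ∘ ((↑) : Set.range (fun n ↦ a + m * n) → ℕ))
      (qPochInf (q ^ a) (q ^ m))⁻¹ := by
  have hqm : ‖q ^ m‖ < 1 := by simpa using pow_lt_one₀ (norm_nonneg q) hq hm
  have injective_progression : Function.Injective fun n ↦ a + m * n :=
    (add_right_injective a).comp (mul_right_injective₀ hm)
  refine (injective_progression.hasProd_range_iff (f := fun j : ℕ ↦ (1 - q ^ j)⁻¹)).mpr ?_
  refine ((hasProd_qPochInf hqm (q ^ a)).inv₀ (qPochInf_pow_pow_ne_zero hq ha hm)).congr_fun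
    fun n ↦ ?_
  rw [Function.comp_apply, pow_add, pow_mul]

theorem tendsto_invQPoch (hq : ‖q‖ < 1) :
    Tendsto (invQPoch q) atTop (𝓝 (qPochInf q q)⁻¹) := by
  rw [← Nat.map_cast_int_atTop, tendsto_map'_iff]
  exact (tendsto_qPoch hq q).inv₀ (qPochInf_self_ne_zero hq)

theorem exists_norm_invQPoch_le (hq : ‖q‖ < 1) : ∃ C, ∀ k, ‖invQPoch q k‖ ≤ C := by
  obtain ⟨C, hC⟩ :=
    ((tendsto_invQPoch hq).comp tendsto_natCast_atTop_atTop).norm.bddAbove_range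
  have bound_natCast (n : ℕ) : ‖invQPoch q n‖ ≤ C := hC ⟨n, rfl⟩
  refine ⟨C, fun k ↦ ?_⟩
  obtain hk | hk := lt_or_ge k 0
  · rw [invQPoch_of_neg q hk, norm_zero]
    exact (norm_nonneg _).trans (bound_natCast 0)
  · lift k to ℕ using hk
    exact bound_natCast k

theorem tendsto_tsum_mul_invQPoch {f : ℤ → ℂ} (hq : ‖q‖ < 1) (hf : Summable f) :
    Tendsto (fun n ↦ ∑' j, f j * invQPoch q (n - j)) atTop
      (𝓝 ((∑' j, f j) * (qPochInf q q)⁻¹)) := by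
  obtain ⟨C, hC⟩ := exists_norm_invQPoch_le hq
  refine tendsto_tsum_mul_of_norm_le C hf.norm (fun j ↦ ?_) fun n j ↦ hC _
  exact (tendsto_invQPoch hq).comp (tendsto_atTop_add_const_right _ (-j) tendsto_id)

theorem tendsto_tsum_mul_invQPoch_mul_invQPoch {f : ℤ → ℂ} (hq : ‖q‖ < 1) (hf : Summable f)
    (m : ℤ) :
    Tendsto (fun n ↦ ∑' r, f r * (invQPoch q (n - r) * invQPoch q (n + r + m))) atTop
      (𝓝 ((∑' r, f r) * ((qPochInf q q)⁻¹ * (qPochInf q q)⁻¹))) := by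
  obtain ⟨C, hC⟩ := exists_norm_invQPoch_le hq
  refine tendsto_tsum_mul_of_norm_le (C * C) hf.norm (fun r ↦ ?_) fun n r ↦ ?_
  · have tendsto_shift (k : ℤ) : Tendsto (fun n ↦ invQPoch q (n + k)) atTop
        (𝓝 (qPochInf q q)⁻¹) :=
      (tendsto_invQPoch hq).comp (tendsto_atTop_add_const_right _ k tendsto_id)
    simpa only [sub_eq_add_neg, add_assoc] using (tendsto_shift (-r)).mul (tendsto_shift (r + m))
  · rw [norm_mul]
    exact mul_le_mul (hC _) (hC _) (norm_nonneg _) ((norm_nonneg _).trans (hC 0))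

theorem IsBaileyPair.tsum_eq {m : ℤ} {α β : ℤ → ℂ} (h : IsBaileyPair q m α β) (hq : ‖q‖ < 1)
    (hq0 : q ≠ 0) (hα : Summable fun r ↦ q ^ (r ^ 2 + m * r) * α r)
    (hβ : Summable fun j ↦ q ^ (j ^ 2 + m * j) * β j) :
    ∑' j, q ^ (j ^ 2 + m * j) * β j = (qPochInf q q)⁻¹ * ∑' r, q ^ (r ^ 2 + m * r) * α r := by
  have hinv : (qPochInf q q)⁻¹ ≠ 0 := inv_ne_zero (qPochInf_self_ne_zero hq)
  have finite_identity (n : ℤ) : ∑' j, q ^ (j ^ 2 + m * j) * β j * invQPoch q (n - j) =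
      ∑' r, q ^ (r ^ 2 + m * r) * α r * (invQPoch q (n - r) * invQPoch q (n + r + m)) := by
    have lemma_at := (h.bailey_lemma (not_isOfFinOrder_of_norm_lt_one hq) hq0 n).tsum_eq
    simpa only [mul_assoc, mul_comm (β _)] using lemma_at.symm
  have limits_eq := tendsto_nhds_unique (tendsto_tsum_mul_invQPoch hq hβ)
    ((tendsto_tsum_mul_invQPoch_mul_invQPoch hq hα m).congr fun n ↦ (finite_identity n).symm)
  rw [← mul_assoc] at limits_eq
  rw [mul_right_cancel₀ hinv limits_eq, mul_comm]

theorem jacobi_triple_product {z : ℂ} (hq : ‖q‖ < 1) (hq0 : q ≠ 0) (hz : z ≠ 0) :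
    ∑' r : ℤ, (-z) ^ r * q ^ Ring.choose r 2 =
      qPochInf z q * qPochInf (q / z) q * qPochInf q q := by
  have hinf : qPochInf q q ≠ 0 := qPochInf_self_ne_zero hq
  have summable_theta := summable_zpow_mul_zpow_choose hq hq0 (neg_ne_zero.mpr hz)
  have sum_side := (tendsto_tsum_mul_invQPoch_mul_invQPoch hq summable_theta 0).comp
    tendsto_natCast_atTop_atTop
  have product_side := ((tendsto_qPoch hq z).mul (tendsto_qPoch hq (q / z))).mul
    ((tendsto_invQPoch hq).comp
      (tendsto_natCast_atTop_atTop.atTop_add_atTop tendsto_natCast_atTop_atTop))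
  have limits_eq := tendsto_nhds_unique sum_side (product_side.congr fun n ↦ by
    have finite_identity := (hasSum_tripleProductTerm (not_isOfFinOrder_of_norm_lt_one hq)
      hq0 hz n n).tsum_eq
    simpa only [tripleProductTerm, Function.comp_apply, mul_assoc, add_zero] using
      finite_identity.symm)
  field_simp at limits_eq
  linear_combination limits_eq

end InfiniteProducts


section RogersRamanujan

variable {q : ℂ}

theorem tsum_pow_sq_div_qPoch (q : ℂ) :
    ∑' j : ℕ, q ^ j ^ 2 / qPoch q q j = ∑' j : ℤ, q ^ j ^ 2 * invQPoch q j := by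
  rw [← (Nat.cast_injective (R := ℤ)).tsum_eq]
  · refine tsum_congr fun j ↦ ?_
    rw [invQPoch_natCast, div_eq_mul_inv]
    norm_cast
  · intro j hj
    exact ⟨j.toNat, Int.toNat_of_nonneg (nonneg_of_invQPoch_ne_zero (right_ne_zero_of_mul hj))⟩

theorem zpow_sq_mul_zpow_sq_mul_neg_one_zpow {K : Type*} [Field K] {q : K} (hq0 : q ≠ 0) (r : ℤ) :
    q ^ r ^ 2 * (q ^ r ^ 2 * ((-1) ^ r * q ^ Ring.choose r 2)) =
      (-(q ^ 2)) ^ r * (q ^ 5) ^ Ring.choose r 2 := by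
  have exponents : q ^ r ^ 2 * q ^ r ^ 2 * q ^ Ring.choose r 2 =
      (q ^ 2) ^ r * (q ^ 5) ^ Ring.choose r 2 := by
    simp only [← zpow_natCast, ← zpow_mul, ← zpow_add₀ hq0]
    congr 1
    push_cast
    linear_combination -2 * two_mul_choose_two r
  rw [← neg_one_mul (q ^ 2), mul_zpow]
  linear_combination (-1) ^ r * exponents

theorem tsum_zpow_sq_mul_invQPoch (hq : ‖q‖ < 1) (hq0 : q ≠ 0) :
    ∑' j : ℤ, q ^ j ^ 2 * invQPoch q j =
      (qPochInf q q)⁻¹ * ∑' r : ℤ, (-(q ^ 2)) ^ r * (q ^ 5) ^ Ring.choose r 2 := by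
  have hq5 : ‖q ^ 5‖ < 1 := by simpa using pow_lt_one₀ (norm_nonneg q) hq (by norm_num)
  obtain ⟨C, hC⟩ := exists_norm_invQPoch_le hq
  have summable_right : Summable fun r : ℤ ↦ (-(q ^ 2)) ^ r * (q ^ 5) ^ Ring.choose r 2 :=
    summable_zpow_mul_zpow_choose hq5 (pow_ne_zero 5 hq0) (neg_ne_zero.mpr (pow_ne_zero 2 hq0))
  have summable_left : Summable fun j : ℤ ↦ q ^ j ^ 2 * invQPoch q j := by
    refine Summable.of_norm_bounded ((summable_zpow_sq hq hq0).norm.mul_right C) fun j ↦ ?_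
    rw [norm_mul]
    exact mul_le_mul_of_nonneg_left (hC j) (norm_nonneg _)
  have limit := (isBaileyPair_invQPoch (not_isOfFinOrder_of_norm_lt_one hq) hq0).tsum_eq hq hq0
  simp only [zero_mul, add_zero, zpow_sq_mul_zpow_sq_mul_neg_one_zpow hq0] at limit
  exact limit summable_right summable_left

theorem tsum_neg_sq_zpow_mul_pow_five_zpow_choose (hq : ‖q‖ < 1) (hq0 : q ≠ 0) :
    ∑' r : ℤ, (-(q ^ 2)) ^ r * (q ^ 5) ^ Ring.choose r 2 =
      qPochInf (q ^ 2) (q ^ 5) * qPochInf (q ^ 3) (q ^ 5) * qPochInf (q ^ 5) (q ^ 5) := by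
  have hq5 : ‖q ^ 5‖ < 1 := by simpa using pow_lt_one₀ (norm_nonneg q) hq (by norm_num)
  rw [jacobi_triple_product hq5 (pow_ne_zero 5 hq0) (pow_ne_zero 2 hq0),
    show q ^ 5 / q ^ 2 = q ^ 3 by field_simp]

theorem setOf_mod_five_eq :
    {j : ℕ | 0 < j ∧ j % 5 ≠ 0 ∧ j % 5 ≠ 2 ∧ j % 5 ≠ 3} =
      Set.range (fun n ↦ 1 + 5 * n) ∪ Set.range (fun n ↦ 4 + 5 * n) := by
  ext j
  simp only [Set.mem_ofPred_eq, Set.mem_union, Set.mem_range]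
  constructor
  · intro hj
    obtain hj | hj : j % 5 = 1 ∨ j % 5 = 4 := by lia
    · exact .inl ⟨j / 5, by lia⟩
    · exact .inr ⟨j / 5, by lia⟩
  · rintro (⟨n, rfl⟩ | ⟨n, rfl⟩) <;> lia

theorem tprod_mod_five_inv_one_sub_pow (hq : ‖q‖ < 1) :
    ∏' j : {j : ℕ // 0 < j ∧ j % 5 ≠ 0 ∧ j % 5 ≠ 2 ∧ j % 5 ≠ 3}, (1 - q ^ (j : ℕ))⁻¹ =
      (qPochInf q (q ^ 5))⁻¹ * (qPochInf (q ^ 4) (q ^ 5))⁻¹ := by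
  have residue_one := hasProd_inv_one_sub_pow_range hq one_ne_zero (by norm_num : 5 ≠ 0)
  have residue_four := hasProd_inv_one_sub_pow_range hq four_ne_zero (by norm_num : 5 ≠ 0)
  have disjoint_residues :
      Disjoint (Set.range fun n ↦ 1 + 5 * n) (Set.range fun n ↦ 4 + 5 * n) := by
    rw [Set.disjoint_range_iff]
    lia
  have union := residue_one.mul_disjoint disjoint_residues residue_four
  rw [← setOf_mod_five_eq, pow_one] at union
  exact union.tprod_eq

end RogersRamanujan

/-- The second Rogers–Ramanujan identity. -/
theorem rogers_ramanujan_second (q : ℂ) (hq : ‖q‖ < 1) :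
    ∑' j : ℕ, q ^ (j ^ 2) / qPoch q q j =
      ∏' j : {j : ℕ // 0 < j ∧ j % 5 ≠ 0 ∧ j % 5 ≠ 2 ∧ j % 5 ≠ 3},
        (1 - q ^ (j : ℕ))⁻¹ := by
  obtain rfl | hq0 := eq_or_ne q 0
  · rw [tsum_eq_single 0 fun j hj ↦ by simp [hj], tprod_mod_five_inv_one_sub_pow hq]
    simp [qPoch_zero, qPochInf]
  have dissection : qPochInf q q = qPochInf q (q ^ 5) * qPochInf (q ^ 2) (q ^ 5) *
      qPochInf (q ^ 3) (q ^ 5) * qPochInf (q ^ 4) (q ^ 5) * qPochInf (q ^ 5) (q ^ 5) := by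
    rw [qPochInf_eq_prod_residues hq q 5]
    simp [Fin.prod_univ_five, ← pow_succ']
  have factor_ne_zero {a : ℕ} (ha : a ≠ 0) : qPochInf (q ^ a) (q ^ 5) ≠ 0 :=
    qPochInf_pow_pow_ne_zero hq ha (by norm_num)
  have two_ne := factor_ne_zero two_ne_zero
  have three_ne := factor_ne_zero three_ne_zero
  have five_ne := factor_ne_zero (by norm_num : 5 ≠ 0)
  rw [tsum_pow_sq_div_qPoch, tsum_zpow_sq_mul_invQPoch hq hq0,
    tsum_neg_sq_zpow_mul_pow_five_zpow_choose hq hq0, tprod_mod_five_inv_one_sub_pow hq, dissection]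
  field_simp
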